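/- Let Φ₁, Φ₂ : ℂⁿ → ℝ be strictly plurisubharmonic quadratic forms, let κ : ℂⁿ → ℂⁿ be an ℝ-linear isomorphism, let â ∈ ℂ, and let Ψ be a holomorphic quadratic form on ℂ^{2n} = ℂⁿ_z × ℂⁿ_θ such that for some c > 0, 2 Re Ψ(z, w̄) − Φ₁(z) − Φ₂(w) ≤ −c|z − κ(w)|² for all z, w ∈ ℂⁿ. Then for every s ∈ ℝ there exists M > 0 such that for every u ∈ H^s_{Φ₂}(ℂⁿ), the function G u(z) = â ∫_{ℂⁿ} e^{2Ψ(z,w̄)} u(w) e^{-2Φ₂(w)} dL(w) is entire on ℂⁿ and satisfies ∫_{ℂⁿ} |Gu(z)|² ⟨z⟩^{2s} e^{-2Φ₁(z)} dL(z) ≤ M² ∫_{ℂⁿ} |u(w)|² ⟨w⟩^{2s} e^{-2Φ₂(w)} dL(w). -/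

import Mathlib

open Matrix MeasureTheory ENNReal

noncomputable section

/-- The squared Euclidean norm `|z|²` on `ℂⁿ`. -/
def eSq {n : ℕ} (z : Fin n → ℂ) : ℝ := ∑ i, Complex.normSq (z i)

/-- The Japanese bracket `⟨z⟩ = (1 + |z|²)^{1/2}`. -/
def jb {n : ℕ} (z : Fin n → ℂ) : ℝ := Real.sqrt (1 + eSq z)

/-- `Φ : ℂⁿ → ℝ` is a (real) quadratic form of the underlying real coordinates. -/
def IsRQuad {n : ℕ} (Φ : (Fin n → ℂ) → ℝ) : Prop :=
  ∃ B : (Fin n → ℂ) →ₗ[ℝ] (Fin n → ℂ) →ₗ[ℝ] ℝ, ∀ z, Φ z = B z z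

/-- `Φ : ℂⁿ → ℝ` is a strictly plurisubharmonic quadratic form.  For a quadratic form `Φ`,
the Levi form satisfies `(∂²_{z z̄}Φ) w ⋅ w̄ = (Φ(w) + Φ(i w))/2`, so positive definiteness of
the Levi matrix is equivalent to `Φ(w) + Φ(i·w) > 0` for all `w ≠ 0`. -/
def IsSPSH {n : ℕ} (Φ : (Fin n → ℂ) → ℝ) : Prop :=
  IsRQuad Φ ∧ ∀ z : Fin n → ℂ, z ≠ 0 → 0 < Φ z + Φ (Complex.I • z)

/-- The squared weighted norm `‖u‖_s² = ∫ |u(z)|² ⟨z⟩^{2s} e^{-2Φ(z)} L(dz)` (in `ℝ≥0∞`). -/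
def hnorm {n : ℕ} (Φ : (Fin n → ℂ) → ℝ) (s : ℝ) (u : (Fin n → ℂ) → ℂ) : ℝ≥0∞ :=
  ∫⁻ z : Fin n → ℂ, (‖u z‖₊ : ℝ≥0∞) ^ 2 * ENNReal.ofReal (jb z ^ (2 * s) * Real.exp (-2 * Φ z))

/-- A conic subset of `ℂⁿ`. -/
def IsConic {n : ℕ} (V : Set (Fin n → ℂ)) : Prop := ∀ z ∈ V, ∀ t : ℝ, 0 < t → t • z ∈ V

/-- The `1/2`-Gelfand–Shilov wavefront set of `u` relative to `Φ`: the complement in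
`ℂⁿ∖{0}` of the points having an open conic neighborhood in `ℂⁿ∖{0}` on which
`|u(z)| ≤ C e^{Φ(z) - c|z|²}`. -/
def wf {n : ℕ} (Φ : (Fin n → ℂ) → ℝ) (u : (Fin n → ℂ) → ℂ) : Set (Fin n → ℂ) :=
  {z₀ | z₀ ≠ 0 ∧ ¬ ∃ V : Set (Fin n → ℂ), IsOpen V ∧ IsConic V ∧ (0 : Fin n → ℂ) ∉ V ∧ z₀ ∈ V ∧
      ∃ C c : ℝ, 0 < C ∧ 0 < c ∧ ∀ z ∈ V, ‖u z‖ ≤ C * Real.exp (Φ z - c * eSq z)}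

/-- A holomorphic quadratic form on `ℂ^{2n} = ℂⁿ_z × ℂⁿ_θ`. -/
def IsCQuad2 {n : ℕ} (Ψ : (Fin n → ℂ) → (Fin n → ℂ) → ℂ) : Prop :=
  ∃ B : ((Fin n → ℂ) × (Fin n → ℂ)) →ₗ[ℂ] ((Fin n → ℂ) × (Fin n → ℂ)) →ₗ[ℂ] ℂ,
    ∀ z θ, Ψ z θ = B (z, θ) (z, θ)

/-- A real quadratic form on `ℂⁿ × ℂⁿ` viewed as a real vector space. -/
def IsRQuadPair {n : ℕ} (R : (Fin n → ℂ) → (Fin n → ℂ) → ℝ) : Prop :=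
  ∃ B : ((Fin n → ℂ) × (Fin n → ℂ)) →ₗ[ℝ] ((Fin n → ℂ) × (Fin n → ℂ)) →ₗ[ℝ] ℝ,
    ∀ z w, R z w = B (z, w) (z, w)

/-- The Bergman-form integral operator
`G u (z) = a ∫ e^{2Ψ(z, w̄)} u(w) e^{-2Φ(w)} L(dw)`. -/
def berg {n : ℕ} (a : ℂ) (Ψ : (Fin n → ℂ) → (Fin n → ℂ) → ℂ) (Φ : (Fin n → ℂ) → ℝ)
    (u : (Fin n → ℂ) → ℂ) (z : Fin n → ℂ) : ℂ :=
  a * ∫ w : Fin n → ℂ, Complex.exp (2 * Ψ z (star w)) * u w * (Real.exp (-2 * Φ w) : ℂ)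

lemma eSq_nonneg' {n : ℕ} (z : Fin n → ℂ) : 0 ≤ eSq z :=
  Finset.sum_nonneg fun _ _ => Complex.normSq_nonneg _

lemma eSq_add_le {n : ℕ} (x y : Fin n → ℂ) : eSq (x + y) ≤ 2 * eSq x + 2 * eSq y := by
  unfold eSq
  rw [Finset.mul_sum, Finset.mul_sum, ← Finset.sum_add_distrib]
  refine Finset.sum_le_sum fun i _ => ?_
  simp only [Pi.add_apply, Complex.normSq_apply, Complex.add_re, Complex.add_im]
  nlinarith [sq_nonneg ((x i).re - (y i).re), sq_nonneg ((x i).im - (y i).im)]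

lemma eSq_neg' {n : ℕ} (x : Fin n → ℂ) : eSq (-x) = eSq x := by
  simp [eSq]

lemma norm_sq_le_eSq {n : ℕ} (x : Fin n → ℂ) : ‖x‖ ^ 2 ≤ eSq x := by
  have h : ‖x‖ ≤ Real.sqrt (eSq x) := by
    refine (pi_norm_le_iff_of_nonneg (Real.sqrt_nonneg _)).2 fun i => ?_
    refine Real.le_sqrt_of_sq_le ?_
    rw [← Complex.normSq_eq_norm_sq]
    exact Finset.single_le_sum (f := fun i => Complex.normSq (x i))
      (fun j _ => Complex.normSq_nonneg _) (Finset.mem_univ i)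
  calc ‖x‖ ^ 2 ≤ (Real.sqrt (eSq x)) ^ 2 := by gcongr
    _ = eSq x := Real.sq_sqrt (eSq_nonneg' x)

lemma eSq_le_norm_sq {n : ℕ} (x : Fin n → ℂ) : eSq x ≤ n * ‖x‖ ^ 2 := by
  unfold eSq
  calc ∑ i, Complex.normSq (x i) ≤ ∑ _i : Fin n, ‖x‖ ^ 2 := by
        refine Finset.sum_le_sum fun i _ => ?_
        rw [Complex.normSq_eq_norm_sq]
        gcongr
        exact norm_le_pi_norm x i
    _ = n * ‖x‖ ^ 2 := by simp

lemma eSq_lin {n : ℕ} (L : (Fin n → ℂ) →ₗ[ℝ] (Fin n → ℂ)) :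
    ∃ A : ℝ, 1 ≤ A ∧ ∀ x, eSq (L x) ≤ A * eSq x := by
  let L' := LinearMap.toContinuousLinearMap L
  refine ⟨1 + n * ‖L'‖ ^ 2, by
    have : 0 ≤ (n : ℝ) * ‖L'‖ ^ 2 := by positivity
    linarith, fun x => ?_⟩
  have h1 : ‖L x‖ ≤ ‖L'‖ * ‖x‖ := L'.le_opNorm x
  have h2 := eSq_le_norm_sq (L x)
  have h3 := norm_sq_le_eSq x
  have h4 : ‖L x‖ ^ 2 ≤ (‖L'‖ * ‖x‖) ^ 2 := by gcongr
  have h5 : (n : ℝ) * ‖L x‖ ^ 2 ≤ n * ((‖L'‖ * ‖x‖) ^ 2) := by gcongr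
  have h6 : (n : ℝ) * ‖L'‖ ^ 2 * ‖x‖ ^ 2 ≤ n * ‖L'‖ ^ 2 * eSq x := by gcongr
  nlinarith [eSq_nonneg' x]

lemma continuous_eSq {n : ℕ} : Continuous (eSq : (Fin n → ℂ) → ℝ) := by
  unfold eSq
  refine continuous_finsetSum _ fun i _ => ?_
  exact Complex.continuous_normSq.comp (continuous_apply i)

lemma continuous_jb {n : ℕ} : Continuous (jb : (Fin n → ℂ) → ℝ) := by
  unfold jb
  exact (continuous_const.add continuous_eSq).sqrt

lemma one_le_jb {n : ℕ} (z : Fin n → ℂ) : 1 ≤ jb z := by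
  unfold jb
  exact Real.one_le_sqrt.2 (by linarith [eSq_nonneg' z])

lemma jb_sq {n : ℕ} (z : Fin n → ℂ) : jb z ^ 2 = 1 + eSq z := by
  unfold jb
  exact Real.sq_sqrt (by linarith [eSq_nonneg' z])

lemma norm_le_jb {n : ℕ} (z : Fin n → ℂ) : ‖z‖ ≤ jb z := by
  refine Real.le_sqrt_of_sq_le ?_
  linarith [norm_sq_le_eSq z]

lemma continuous_jb_rpow {n : ℕ} (t : ℝ) : Continuous (fun z : Fin n → ℂ => jb z ^ t) :=
  continuous_jb.rpow_const fun z => Or.inl (by linarith [one_le_jb z])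

lemma integrable_gauss {n : ℕ} {b : ℝ} (hb : 0 < b) :
    Integrable (fun w : Fin n → ℂ => Real.exp (-b * eSq w)) := by
  have h1 : Integrable (fun z : ℂ => Real.exp (-b * Complex.normSq z)) := by
    have := (GaussianFourier.integrable_cexp_neg_mul_sq_norm_add (V := ℂ) (b := (b : ℂ))
      (by simpa using hb) 0 0).norm
    refine this.congr (Filter.Eventually.of_forall fun z => ?_)
    simp only [Complex.norm_exp, Complex.normSq_eq_norm_sq]
    congr 1
    simp only [zero_mul, add_zero]
    rw [← Complex.ofReal_pow, ← Complex.ofReal_neg, ← Complex.ofReal_mul, Complex.ofReal_re]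
  have h2 := Integrable.fintype_prod (ι := Fin n) (E := ℂ) (𝕜 := ℝ)
    (f := fun _ z => Real.exp (-b * Complex.normSq z)) (μ := fun _ => volume) (fun _ => h1)
  refine h2.congr (Filter.Eventually.of_forall fun w => ?_)
  simp only [eSq, Finset.mul_sum, Real.exp_sum]

lemma jb_rpow_le_exp (t : ℝ) {ε : ℝ} (hε : 0 < ε) :
    ∃ C : ℝ, 0 < C ∧ ∀ (n : ℕ) (w : Fin n → ℂ), jb w ^ t ≤ C * Real.exp (ε * eSq w) := by
  set T := |t| + 1 with hT
  have hTp : 0 < T := by positivity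
  set η := ε / T with hη
  have hηp : 0 < η := by positivity
  refine ⟨(η⁻¹ * Real.exp η) ^ T, by positivity, fun n w => ?_⟩
  have hj := one_le_jb w
  have h0 := eSq_nonneg' w
  have h1 : jb w ≤ η⁻¹ * Real.exp η * Real.exp (η * eSq w) := by
    have h2 : jb w ≤ 1 + eSq w := by rw [← jb_sq]; nlinarith
    have h3 := Real.add_one_le_exp (η * (1 + eSq w))
    have h4 : Real.exp η * Real.exp (η * eSq w) = Real.exp (η * (1 + eSq w)) := by
      rw [← Real.exp_add]; ring_nf
    rw [mul_assoc, h4, inv_mul_eq_div, le_div_iff₀ hηp]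
    nlinarith
  calc jb w ^ t ≤ jb w ^ T := Real.rpow_le_rpow_of_exponent_le hj (by
        linarith [le_abs_self t])
    _ ≤ (η⁻¹ * Real.exp η * Real.exp (η * eSq w)) ^ T :=
        Real.rpow_le_rpow (by linarith) h1 hTp.le
    _ = _ := by
        rw [Real.mul_rpow (by positivity) (by positivity), ← Real.exp_mul]
        congr 2
        rw [hη]; field_simp

/-- Peetre type inequality. -/
lemma peetre {n : ℕ} (κ : (Fin n → ℂ) ≃ₗ[ℝ] (Fin n → ℂ)) (s : ℝ) {ε : ℝ} (hε : 0 < ε) :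
    ∃ C : ℝ, 0 < C ∧ ∀ z w, jb z ^ s ≤ C * jb w ^ s * Real.exp (ε * eSq (z - κ w)) := by
  obtain ⟨A, hA, hAκ⟩ := eSq_lin κ.toLinearMap
  obtain ⟨A', hA', hAκ'⟩ := eSq_lin κ.symm.toLinearMap
  obtain ⟨C, hC, hCj⟩ := jb_rpow_le_exp |s| hε
  set Q := 2 * A * A' with hQ
  have hQ1 : 1 ≤ Q := by nlinarith
  have key1 : ∀ z w, jb z ≤ Q * jb w * jb (z - κ w) := by
    intro z w
    have h1 := eSq_add_le (z - κ w) (κ w)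
    rw [sub_add_cancel] at h1
    have h2 : eSq (κ w) ≤ A * eSq w := hAκ w
    have a0 := eSq_nonneg' w
    have b0 := eSq_nonneg' (z - κ w)
    have j1 := one_le_jb w
    have j2 := one_le_jb (z - κ w)
    have h3 : 2 * A ≤ Q := by nlinarith
    have h4 : 2 ≤ Q := by nlinarith
    have h5 : Q * (1 + eSq w + eSq (z - κ w)) ≤
        Q ^ 2 * ((1 + eSq w) * (1 + eSq (z - κ w))) := by
      have : Q ≤ Q ^ 2 := by nlinarith
      apply mul_le_mul this _ (by positivity) (by positivity)
      nlinarith [mul_nonneg a0 b0]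
    refine le_of_sq_le_sq ?_ (by positivity)
    rw [mul_pow, mul_pow, jb_sq, jb_sq, jb_sq, mul_assoc]
    nlinarith [mul_le_mul_of_nonneg_right h3 a0, mul_le_mul_of_nonneg_right h4 b0]
  have key2 : ∀ z w, jb w ≤ Q * jb z * jb (z - κ w) := by
    intro z w
    have h1 := eSq_add_le z (-(z - κ w))
    rw [eSq_neg', ← sub_eq_add_neg, _root_.sub_sub_cancel] at h1
    have h2 : eSq w ≤ A' * eSq (κ w) := by simpa using hAκ' (κ w)
    have a0 := eSq_nonneg' z
    have b0 := eSq_nonneg' (z - κ w)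
    have j1 := one_le_jb z
    have j2 := one_le_jb (z - κ w)
    have h3 : 2 * A' ≤ Q := by nlinarith
    have h5 : Q * (1 + eSq z + eSq (z - κ w)) ≤
        Q ^ 2 * ((1 + eSq z) * (1 + eSq (z - κ w))) := by
      have : Q ≤ Q ^ 2 := by nlinarith
      apply mul_le_mul this _ (by positivity) (by positivity)
      nlinarith [mul_nonneg a0 b0]
    refine le_of_sq_le_sq ?_ (by positivity)
    rw [mul_pow, mul_pow, jb_sq, jb_sq, jb_sq, mul_assoc]
    have h6 : A' * eSq (κ w) ≤ A' * (2 * eSq z + 2 * eSq (z - κ w)) := by gcongr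
    nlinarith [mul_le_mul_of_nonneg_right h3 a0, mul_le_mul_of_nonneg_right h3 b0]
  refine ⟨Q ^ |s| * C, by positivity, fun z w => ?_⟩
  have jz : 0 < jb z := by linarith [one_le_jb z]
  have jw : 0 < jb w := by linarith [one_le_jb w]
  have jd : 0 < jb (z - κ w) := by linarith [one_le_jb (z - κ w)]
  have hQ0 : 0 < Q := by linarith
  have main : jb z ^ s ≤ Q ^ |s| * jb w ^ s * jb (z - κ w) ^ |s| := by
    rcases le_or_gt 0 s with hs | hs
    · rw [abs_of_nonneg hs, ← Real.mul_rpow hQ0.le jw.le, ← Real.mul_rpow (by positivity) jd.le]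
      exact Real.rpow_le_rpow jz.le (key1 z w) hs
    · have h := Real.rpow_le_rpow_of_nonpos jw (key2 z w) hs.le
      rw [Real.mul_rpow (by positivity) jd.le, Real.mul_rpow hQ0.le jz.le] at h
      rw [abs_of_neg hs, Real.rpow_neg hQ0.le, Real.rpow_neg jd.le]
      have q1 : 0 < Q ^ s := by positivity
      have q2 : 0 < jb (z - κ w) ^ s := by positivity
      rw [← div_eq_mul_inv, le_div_iff₀ q2, inv_mul_eq_div, le_div_iff₀ q1]
      linarith
  calc jb z ^ s ≤ Q ^ |s| * jb w ^ s * jb (z - κ w) ^ |s| := main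
    _ ≤ Q ^ |s| * jb w ^ s * (C * Real.exp (ε * eSq (z - κ w))) := by
        gcongr
        exact hCj n _
    _ = _ := by ring

lemma IsRQuad.cont {n : ℕ} {Φ : (Fin n → ℂ) → ℝ} (h : IsRQuad Φ) : Continuous Φ := by
  obtain ⟨B, hB⟩ := h
  have : Φ = fun z => B.toContinuousBilinearMap z z := by
    funext z; simp [hB]
  rw [this]
  fun_prop

/-- Basic pointwise kernel estimate. -/
lemma kernel_est {n : ℕ} {Φ₁ Φ₂ : (Fin n → ℂ) → ℝ}
    {κ : (Fin n → ℂ) ≃ₗ[ℝ] (Fin n → ℂ)}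
    {Ψ : (Fin n → ℂ) → (Fin n → ℂ) → ℂ} {c : ℝ}
    (hest : ∀ z w : Fin n → ℂ,
        2 * (Ψ z (star w)).re - Φ₁ z - Φ₂ w ≤ -c * eSq (z - κ w)) (z w : Fin n → ℂ) :
    ‖Complex.exp (2 * Ψ z (star w))‖ * Real.exp (-2 * Φ₂ w) ≤
      Real.exp (Φ₁ z) * Real.exp (-c * eSq (z - κ w)) * Real.exp (- Φ₂ w) := by
  rw [Complex.norm_exp, ← Real.exp_add, ← Real.exp_add, ← Real.exp_add]
  apply Real.exp_le_exp.2
  have h := hest z w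
  simp only [Complex.mul_re, Complex.re_ofNat, Complex.im_ofNat, zero_mul, sub_zero]
  linarith

lemma integrable_f {n : ℕ} {Φ : (Fin n → ℂ) → ℝ} (hΦ : Continuous Φ) (s : ℝ)
    {u : (Fin n → ℂ) → ℂ} (hu : Continuous u) (h : hnorm Φ s u < ⊤) :
    Integrable (fun w => ‖u w‖ ^ 2 * (jb w ^ (2 * s) * Real.exp (-2 * Φ w))) := by
  have hc : Continuous (fun w => ‖u w‖ ^ 2 * (jb w ^ (2 * s) * Real.exp (-2 * Φ w))) := by
    have := continuous_jb_rpow (n := n) (2 * s)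
    fun_prop
  refine ⟨hc.aestronglyMeasurable, ?_⟩
  rw [hasFiniteIntegral_iff_ofReal]
  · refine lt_of_eq_of_lt (lintegral_congr fun w => ?_) h
    rw [ENNReal.ofReal_mul (by positivity), ENNReal.ofReal_pow (norm_nonneg _), ofReal_norm]
    rfl
  · refine Filter.Eventually.of_forall fun w => ?_
    have := one_le_jb w
    show 0 ≤ _
    positivity

lemma local_bound {n : ℕ} {Φ₁ Φ₂ : (Fin n → ℂ) → ℝ} (hΦ₁ : Continuous Φ₁)
    (κ : (Fin n → ℂ) ≃ₗ[ℝ] (Fin n → ℂ))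
    {Ψ : (Fin n → ℂ) → (Fin n → ℂ) → ℂ} {c : ℝ} (hc : 0 < c)
    (hest : ∀ z w : Fin n → ℂ,
        2 * (Ψ z (star w)).re - Φ₁ z - Φ₂ w ≤ -c * eSq (z - κ w)) (s : ℝ)
    (u : (Fin n → ℂ) → ℂ) (z₀ : Fin n → ℂ) :
    ∃ C δ : ℝ, 0 < C ∧ 0 < δ ∧ ∀ z ∈ Metric.ball z₀ 1, ∀ w,
      ‖Complex.exp (2 * Ψ z (star w))‖ * ‖u w‖ * Real.exp (-2 * Φ₂ w) * jb w ≤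
        C * (Real.exp (-δ * eSq w) + ‖u w‖ ^ 2 * (jb w ^ (2 * s) * Real.exp (-2 * Φ₂ w))) := by
  obtain ⟨A', hA', hAκ'⟩ := eSq_lin κ.symm.toLinearMap
  have hP : Continuous fun z => Φ₁ z + c * eSq z := by
    have := continuous_eSq (n := n)
    fun_prop
  obtain ⟨P, hPb⟩ := ((isCompact_closedBall z₀ 1).image hP).bddAbove
  set δ := c / (2 * A') with hδ
  have hδp : 0 < δ := by positivity
  obtain ⟨C, hC, hCj⟩ := jb_rpow_le_exp (1 - s) (half_pos hδp)
  refine ⟨Real.exp P * C, δ, by positivity, hδp, fun z hz w => ?_⟩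
  have hzP : Φ₁ z + c * eSq z ≤ P :=
    hPb ⟨z, Metric.ball_subset_closedBall hz, rfl⟩
  have hk := kernel_est hest z w
  have e1 : -c * eSq (z - κ w) ≤ -δ * eSq w + c * eSq z := by
    have h1 := eSq_add_le z (-(z - κ w))
    rw [eSq_neg', ← sub_eq_add_neg, _root_.sub_sub_cancel] at h1
    have h2 : eSq w ≤ A' * eSq (κ w) := by simpa using hAκ' (κ w)
    have h3 : δ * eSq w ≤ c / 2 * eSq (κ w) := by
      calc δ * eSq w ≤ δ * (A' * eSq (κ w)) := by gcongr
        _ = c / 2 * eSq (κ w) := by rw [hδ]; field_simp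
    nlinarith
  have hj := one_le_jb w
  have jw : 0 < jb w := by linarith
  set f := ‖u w‖ * jb w ^ s * Real.exp (-Φ₂ w) with hf
  have hf0 : 0 ≤ f := by positivity
  have hf2 : ‖u w‖ ^ 2 * (jb w ^ (2 * s) * Real.exp (-2 * Φ₂ w)) = f ^ 2 := by
    rw [hf, mul_pow, mul_pow, ← Real.exp_nat_mul, ← Real.rpow_natCast (jb w ^ s),
      ← Real.rpow_mul jw.le]
    push_cast
    ring_nf
  have hg2 : Real.exp (-δ * eSq w) = (Real.exp (-(δ / 2) * eSq w)) ^ 2 := by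
    rw [← Real.exp_nat_mul]; push_cast; ring_nf
  calc ‖Complex.exp (2 * Ψ z (star w))‖ * ‖u w‖ * Real.exp (-2 * Φ₂ w) * jb w
      = (‖Complex.exp (2 * Ψ z (star w))‖ * Real.exp (-2 * Φ₂ w)) * (‖u w‖ * jb w) := by ring
    _ ≤ (Real.exp (Φ₁ z) * Real.exp (-c * eSq (z - κ w)) * Real.exp (- Φ₂ w))
          * (‖u w‖ * jb w) := by gcongr
    _ ≤ (Real.exp (P - δ * eSq w) * Real.exp (- Φ₂ w)) * (‖u w‖ * jb w) := by
        rw [← Real.exp_add]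
        gcongr
        linarith
    _ = Real.exp P * Real.exp (-δ * eSq w) * (jb w ^ (1 - s) * f) := by
        have : jb w = jb w ^ (1 - s) * jb w ^ s := by
          rw [← Real.rpow_add jw]; simp
        rw [hf, sub_eq_add_neg P, Real.exp_add, neg_mul]
        conv_lhs => rw [this]
        ring
    _ ≤ Real.exp P * Real.exp (-δ * eSq w) * ((C * Real.exp (δ / 2 * eSq w)) * f) := by
        gcongr
        exact hCj n w
    _ = Real.exp P * C * (Real.exp (-(δ / 2) * eSq w) * f) := by
        have : Real.exp (-(δ / 2) * eSq w)
            = Real.exp (-δ * eSq w) * Real.exp (δ / 2 * eSq w) := by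
          rw [← Real.exp_add]; ring_nf
        rw [this]; ring
    _ ≤ _ := by
        rw [hf2, hg2]
        gcongr
        nlinarith [sq_nonneg (Real.exp (-(δ / 2) * eSq w) - f),
          sq_nonneg (Real.exp (-(δ / 2) * eSq w)), sq_nonneg f]

lemma berg_diff {n : ℕ} {Φ₁ Φ₂ : (Fin n → ℂ) → ℝ} (hΦ₁ : Continuous Φ₁) (hΦ₂ : Continuous Φ₂)
    (κ : (Fin n → ℂ) ≃ₗ[ℝ] (Fin n → ℂ)) (a : ℂ)
    {Ψ : (Fin n → ℂ) → (Fin n → ℂ) → ℂ} (hΨ : IsCQuad2 Ψ) {c : ℝ} (hc : 0 < c)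
    (hest : ∀ z w : Fin n → ℂ,
        2 * (Ψ z (star w)).re - Φ₁ z - Φ₂ w ≤ -c * eSq (z - κ w)) (s : ℝ)
    {u : (Fin n → ℂ) → ℂ} (hu : Continuous u) (h : hnorm Φ₂ s u < ⊤) :
    Differentiable ℂ (berg a Ψ Φ₂ u) := by
  intro z₀
  unfold berg
  refine DifferentiableAt.const_mul ?_ a
  obtain ⟨B₀, hB₀⟩ := hΨ
  set B := B₀.toContinuousBilinearMap with hB
  have hΨB : ∀ z θ, Ψ z θ = B (z, θ) (z, θ) := fun z θ => by rw [hB₀]; rfl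
  obtain ⟨C, δ, hC, hδ, hb⟩ := local_bound hΦ₁ κ hc hest s u z₀
  let ι : (Fin n → ℂ) →L[ℂ] (Fin n → ℂ) × (Fin n → ℂ) := ContinuousLinearMap.inl ℂ _ _
  let D : (Fin n → ℂ) → (Fin n → ℂ) → ((Fin n → ℂ) →L[ℂ] ℂ) := fun z w =>
    (B (z, star w)).comp ι + (B.flip (z, star w)).comp ι
  let F' : (Fin n → ℂ) → (Fin n → ℂ) → ((Fin n → ℂ) →L[ℂ] ℂ) := fun z w =>
    (Complex.exp (2 * Ψ z (star w)) * u w * (Real.exp (-2 * Φ₂ w) : ℂ) * 2) • D z w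
  have hΨc : Continuous fun p : (Fin n → ℂ) × (Fin n → ℂ) => Ψ p.1 (star p.2) := by
    simp only [hΨB]
    fun_prop
  have hΨc' : ∀ z, Continuous fun w : Fin n → ℂ => Ψ z (star w) := fun z =>
    hΨc.comp (Continuous.prodMk_right z)
  have hFc : ∀ z, Continuous fun w : Fin n → ℂ =>
      Complex.exp (2 * Ψ z (star w)) * u w * (Real.exp (-2 * Φ₂ w) : ℂ) := by
    intro z
    exact ((Complex.continuous_exp.comp (continuous_const.mul (hΨc' z))).mul hu).mul
      (Complex.continuous_ofReal.comp (Real.continuous_exp.comp (continuous_const.mul hΦ₂)))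
  have hDc : ∀ z, Continuous fun w : Fin n → ℂ => D z w := by
    intro z
    have h1 : Continuous fun w : Fin n → ℂ => (z, star w) := by fun_prop
    exact ((B.continuous.comp h1).clm_comp continuous_const).add
      ((B.flip.continuous.comp h1).clm_comp continuous_const)
  have hint : Integrable (fun w : Fin n → ℂ => C * (Real.exp (-δ * eSq w) +
      ‖u w‖ ^ 2 * (jb w ^ (2 * s) * Real.exp (-2 * Φ₂ w)))) :=
    ((integrable_gauss hδ).add (integrable_f hΦ₂ s hu h)).const_mul C
  have hnormF : ∀ z w, ‖Complex.exp (2 * Ψ z (star w)) * u w * (Real.exp (-2 * Φ₂ w) : ℂ)‖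
      = ‖Complex.exp (2 * Ψ z (star w))‖ * ‖u w‖ * Real.exp (-2 * Φ₂ w) := by
    intro z w
    rw [norm_mul, norm_mul, Complex.norm_real, Real.norm_of_nonneg (Real.exp_pos _).le]
  have hι : ‖ι‖ ≤ 1 := ContinuousLinearMap.opNorm_le_bound _ zero_le_one fun x => by
    simp [ι]
  have hDn : ∀ z ∈ Metric.ball z₀ 1, ∀ w,
      ‖D z w‖ ≤ (‖B‖ + ‖B.flip‖) * ((‖z₀‖ + 2) * jb w) := by
    intro z hz w
    have hp : ‖(z, star w)‖ ≤ (‖z₀‖ + 2) * jb w := by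
      have h1 : ‖z‖ ≤ ‖z₀‖ + 1 := by
        have := norm_le_norm_add_norm_sub' z z₀
        rw [Metric.mem_ball, dist_eq_norm] at hz
        linarith
      have hj := one_le_jb w
      have hj' := norm_le_jb w
      have := norm_nonneg z₀
      rw [Prod.norm_mk, norm_star]
      refine max_le ?_ ?_ <;> nlinarith
    have h1 : ‖(B (z, star w)).comp ι‖ ≤ ‖B‖ * ((‖z₀‖ + 2) * jb w) :=
      calc _ ≤ ‖B (z, star w)‖ * ‖ι‖ := ContinuousLinearMap.opNorm_comp_le _ _
        _ ≤ ‖B (z, star w)‖ * 1 := by gcongr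
        _ ≤ ‖B‖ * ‖(z, star w)‖ := by rw [mul_one]; exact B.le_opNorm _
        _ ≤ _ := by gcongr
    have h2 : ‖(B.flip (z, star w)).comp ι‖ ≤ ‖B.flip‖ * ((‖z₀‖ + 2) * jb w) :=
      calc _ ≤ ‖B.flip (z, star w)‖ * ‖ι‖ := ContinuousLinearMap.opNorm_comp_le _ _
        _ ≤ ‖B.flip (z, star w)‖ * 1 := by gcongr
        _ ≤ ‖B.flip‖ * ‖(z, star w)‖ := by rw [mul_one]; exact B.flip.le_opNorm _
        _ ≤ _ := by gcongr
    calc ‖D z w‖ ≤ _ := norm_add_le _ _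
      _ ≤ _ := add_le_add h1 h2
      _ = _ := by ring
  refine (hasFDerivAt_integral_of_dominated_of_fderiv_le (𝕜 := ℂ) (F' := F')
    (bound := fun w => (2 * ((‖B‖ + ‖B.flip‖) * (‖z₀‖ + 2))) *
      (C * (Real.exp (-δ * eSq w) +
      ‖u w‖ ^ 2 * (jb w ^ (2 * s) * Real.exp (-2 * Φ₂ w)))))
    (Metric.ball_mem_nhds z₀ one_pos) ?_ ?_ ?_ ?_ ?_ ?_).differentiableAt
  · exact Filter.Eventually.of_forall fun z => (hFc z).aestronglyMeasurable
  · refine hint.mono' (hFc z₀).aestronglyMeasurable (Filter.Eventually.of_forall fun w => ?_)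
    refine le_trans ?_ (hb z₀ (Metric.mem_ball_self one_pos) w)
    rw [hnormF]
    exact le_mul_of_one_le_right (by positivity) (one_le_jb w)
  · exact (((hFc z₀).mul continuous_const).smul (hDc z₀)).aestronglyMeasurable
  · refine Filter.Eventually.of_forall fun w z hz => ?_
    have hd := hDn z hz w
    have hbb := hb z hz w
    simp only [F']
    rw [norm_smul, norm_mul, hnormF, Complex.norm_ofNat]
    calc _ ≤ ‖Complex.exp (2 * Ψ z (star w))‖ * ‖u w‖ * Real.exp (-2 * Φ₂ w) * 2 *
          ((‖B‖ + ‖B.flip‖) * ((‖z₀‖ + 2) * jb w)) := by gcongr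
      _ = (2 * ((‖B‖ + ‖B.flip‖) * (‖z₀‖ + 2))) *
        (‖Complex.exp (2 * Ψ z (star w))‖ * ‖u w‖ * Real.exp (-2 * Φ₂ w) * jb w) := by ring
      _ ≤ _ := by gcongr
  · exact hint.const_mul _
  · refine Filter.Eventually.of_forall fun w z hz => ?_
    have hp : HasFDerivAt (fun z : Fin n → ℂ => (z, star w)) ι z :=
      hasFDerivAt_prodMk_left z (star w)
    have h1 := (B.hasFDerivAt_of_bilinear hp hp)
    have h2 : HasFDerivAt (fun z => Ψ z (star w)) (D z w) z := by
      simp only [hΨB]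
      refine h1.congr_fderiv ?_
      ext x
      simp [D, ContinuousLinearMap.precompR, ContinuousLinearMap.precompL]
    have h3 := (((h2.const_mul 2).cexp.mul_const (u w)).mul_const (Real.exp (-2 * Φ₂ w) : ℂ))
    refine h3.congr_fderiv ?_
    ext x
    simp only [F', _root_.smul_apply, smul_eq_mul]
    ring

lemma cs_sq {α : Type*} [MeasurableSpace α] (μ : Measure α) {h g : α → ℝ≥0∞}
    (hh : Measurable h) (hg : Measurable g) :
    (∫⁻ x, h x ^ 2 * g x ∂μ) ^ 2 ≤ (∫⁻ x, h x ^ 2 ∂μ) * ∫⁻ x, h x ^ 2 * g x ^ 2 ∂μ := by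
  have H := ENNReal.lintegral_mul_le_Lp_mul_Lq μ (p := 2) (q := 2) Real.HolderConjugate.two_two
    hh.aemeasurable (hh.mul hg).aemeasurable
  have e : ∀ X : ℝ≥0∞, (X ^ (1 / 2 : ℝ)) ^ 2 = X := fun X => by
    rw [← ENNReal.rpow_natCast, ← ENNReal.rpow_mul]; norm_num
  calc (∫⁻ x, h x ^ 2 * g x ∂μ) ^ 2 = (∫⁻ x, (h * (h * g)) x ∂μ) ^ 2 := by
        congr 2; funext x; simp only [Pi.mul_apply]; ring
    _ ≤ ((∫⁻ a, h a ^ (2:ℝ) ∂μ) ^ (1 / 2 : ℝ) *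
          (∫⁻ a, (h * g) a ^ (2:ℝ) ∂μ) ^ (1 / 2 : ℝ)) ^ 2 := by gcongr
    _ = _ := by
        rw [mul_pow, e, e]
        simp [mul_pow]

lemma schur {n : ℕ} (κ : (Fin n → ℂ) ≃ₗ[ℝ] (Fin n → ℂ)) {b : ℝ} (hb : 0 < b) :
    ∃ K : ℝ, 0 ≤ K ∧ ∀ F : (Fin n → ℂ) → ℝ≥0∞, Measurable F →
      ∫⁻ z, (∫⁻ w, ENNReal.ofReal (Real.exp (-b * eSq (z - κ w))) * F w) ^ 2 ≤
        ENNReal.ofReal K * ∫⁻ w, F w ^ 2 := by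
  obtain ⟨A, hA, hAκ⟩ := eSq_lin κ.symm.toLinearMap
  have hκc : Continuous κ := κ.toLinearMap.continuous_of_finiteDimensional
  have hec := continuous_eSq (n := n)
  set δ := b / A with hδ
  have hδp : 0 < δ := by positivity
  set I₁ := ∫⁻ w : Fin n → ℂ, ENNReal.ofReal (Real.exp (-b * eSq w)) with hI₁
  set I₂ := ∫⁻ w : Fin n → ℂ, ENNReal.ofReal (Real.exp (-δ * eSq w)) with hI₂
  have f1 : I₁ < ⊤ := (integrable_gauss hb).lintegral_lt_top
  have f2 : I₂ < ⊤ := (integrable_gauss hδp).lintegral_lt_top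
  let h : (Fin n → ℂ) → (Fin n → ℂ) → ℝ≥0∞ := fun z w =>
    ENNReal.ofReal (Real.exp (-(b / 2) * eSq (z - κ w)))
  have hh2 : ∀ z w, h z w ^ 2 = ENNReal.ofReal (Real.exp (-b * eSq (z - κ w))) := by
    intro z w
    simp only [h]
    rw [← ENNReal.ofReal_pow (Real.exp_pos _).le, ← Real.exp_nat_mul]
    congr 2
    push_cast; ring
  have hhm : Measurable (fun p : (Fin n → ℂ) × (Fin n → ℂ) => h p.1 p.2) := by
    refine ENNReal.measurable_ofReal.comp (Continuous.measurable ?_)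
    fun_prop
  have hmz : ∀ z, Measurable (fun w => h z w) := fun z => by
    refine ENNReal.measurable_ofReal.comp (Continuous.measurable ?_)
    fun_prop
  have hmw : ∀ w, Measurable (fun z => h z w) := fun w => by
    refine ENNReal.measurable_ofReal.comp (Continuous.measurable ?_)
    fun_prop
  refine ⟨(I₂ * I₁).toReal, ENNReal.toReal_nonneg, fun F hF => ?_⟩
  rw [ENNReal.ofReal_toReal (ENNReal.mul_lt_top f2 f1).ne]
  simp only [← hh2]
  have s2 : ∀ z, ∫⁻ w, h z w ^ 2 ≤ I₂ := by
    intro z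
    calc ∫⁻ w, h z w ^ 2 ≤ ∫⁻ w, ENNReal.ofReal (Real.exp (-δ * eSq (κ.symm z - w))) := by
          refine lintegral_mono fun w => ?_
          rw [hh2]
          refine ENNReal.ofReal_le_ofReal (Real.exp_le_exp.2 ?_)
          have h1 : eSq (κ.symm z - w) ≤ A * eSq (z - κ w) := by
            simpa using hAκ (z - κ w)
          have h2 : δ * eSq (κ.symm z - w) ≤ b * eSq (z - κ w) := by
            calc _ ≤ δ * (A * eSq (z - κ w)) := by gcongr
              _ = _ := by rw [hδ]; field_simp
          linarith
      _ = I₂ := lintegral_sub_left_eq_self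
          (fun w => ENNReal.ofReal (Real.exp (-δ * eSq w))) (κ.symm z)
  have s1 : ∀ w, ∫⁻ z, h z w ^ 2 = I₁ := by
    intro w
    simp only [hh2]
    exact lintegral_sub_right_eq_self
          (fun w => ENNReal.ofReal (Real.exp (-b * eSq w))) (κ w)
  have hm2 : Measurable (fun p : (Fin n → ℂ) × (Fin n → ℂ) => h p.1 p.2 ^ 2 * F p.2 ^ 2) :=
    (hhm.pow_const 2).mul ((hF.comp measurable_snd).pow_const 2)
  calc ∫⁻ z, (∫⁻ w, h z w ^ 2 * F w) ^ 2
      ≤ ∫⁻ z, I₂ * ∫⁻ w, h z w ^ 2 * F w ^ 2 := by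
        refine lintegral_mono fun z => ?_
        refine (cs_sq volume (h := h z) (hmz z) hF).trans ?_
        gcongr
        exact s2 z
    _ = I₂ * ∫⁻ z, ∫⁻ w, h z w ^ 2 * F w ^ 2 := lintegral_const_mul' _ _ f2.ne
    _ = I₂ * ∫⁻ w, ∫⁻ z, h z w ^ 2 * F w ^ 2 := by
        rw [lintegral_lintegral_swap hm2.aemeasurable]
    _ = I₂ * ∫⁻ w, I₁ * F w ^ 2 := by
        congr 1
        refine lintegral_congr fun w => ?_
        rw [lintegral_mul_const _ ((hmw w).pow_const 2)]
        rw [s1]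
    _ = I₂ * I₁ * ∫⁻ w, F w ^ 2 := by
        rw [lintegral_const_mul' _ _ f1.ne, mul_assoc]

lemma hnorm_eq {n : ℕ} (Φ : (Fin n → ℂ) → ℝ) (s : ℝ) (u : (Fin n → ℂ) → ℂ) :
    hnorm Φ s u = ∫⁻ z, (‖u z‖ₑ * ENNReal.ofReal (jb z ^ s * Real.exp (-Φ z))) ^ 2 := by
  unfold hnorm
  refine lintegral_congr fun z => ?_
  have jw : 0 < jb z := by linarith [one_le_jb z]
  rw [mul_pow, ← ENNReal.ofReal_pow (by positivity)]
  congr 2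
  rw [mul_pow, ← Real.exp_nat_mul, ← Real.rpow_natCast (jb z ^ s), ← Real.rpow_mul jw.le]
  push_cast
  ring_nf

lemma berg_bound {n : ℕ} {Φ₁ Φ₂ : (Fin n → ℂ) → ℝ} (hΦ₂ : Continuous Φ₂)
    (κ : (Fin n → ℂ) ≃ₗ[ℝ] (Fin n → ℂ)) (a : ℂ)
    {Ψ : (Fin n → ℂ) → (Fin n → ℂ) → ℂ} {c : ℝ} (hc : 0 < c)
    (hest : ∀ z w : Fin n → ℂ,
        2 * (Ψ z (star w)).re - Φ₁ z - Φ₂ w ≤ -c * eSq (z - κ w)) (s : ℝ) :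
    ∃ M : ℝ, 0 < M ∧ ∀ u : (Fin n → ℂ) → ℂ, Continuous u →
      hnorm Φ₁ s (berg a Ψ Φ₂ u) ≤ ENNReal.ofReal (M ^ 2) * hnorm Φ₂ s u := by
  obtain ⟨C, hC, hpe⟩ := peetre κ s (half_pos hc)
  obtain ⟨K, hK, hsch⟩ := schur κ (half_pos hc)
  set M := Real.sqrt ((‖a‖ * C) ^ 2 * K + 1) with hM
  have hM2 : M ^ 2 = (‖a‖ * C) ^ 2 * K + 1 := Real.sq_sqrt (by positivity)
  refine ⟨M, Real.sqrt_pos.2 (by positivity), fun u hu => ?_⟩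
  rw [hnorm_eq, hnorm_eq]
  set F : (Fin n → ℂ) → ℝ≥0∞ :=
    fun w => ‖u w‖ₑ * ENNReal.ofReal (jb w ^ s * Real.exp (-Φ₂ w)) with hF
  have hFm : Measurable F := by
    have := continuous_jb_rpow (n := n) s
    refine hu.measurable.enorm.mul (ENNReal.measurable_ofReal.comp (Continuous.measurable ?_))
    fun_prop
  have key : ∀ z, ‖berg a Ψ Φ₂ u z‖ₑ * ENNReal.ofReal (jb z ^ s * Real.exp (-Φ₁ z)) ≤
      ENNReal.ofReal (‖a‖ * C) *
        ∫⁻ w, ENNReal.ofReal (Real.exp (-(c / 2) * eSq (z - κ w))) * F w := by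
    intro z
    have jz : 0 < jb z := by linarith [one_le_jb z]
    unfold berg
    rw [enorm_mul, ENNReal.ofReal_mul (norm_nonneg a), ofReal_norm, mul_assoc, mul_assoc]
    refine mul_le_mul' le_rfl ?_
    refine (mul_le_mul_left (enorm_integral_le_lintegral_enorm (fun w : Fin n → ℂ =>
      Complex.exp (2 * Ψ z (star w)) * u w * (Real.exp (-2 * Φ₂ w) : ℂ))) _).trans ?_
    rw [← lintegral_mul_const' _ _ ENNReal.ofReal_ne_top,
      ← lintegral_const_mul' _ _ ENNReal.ofReal_ne_top]
    refine lintegral_mono fun w => ?_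
    have jw : 0 < jb w := by linarith [one_le_jb w]
    simp only [hF]
    rw [← ofReal_norm, ← ofReal_norm, ← ENNReal.ofReal_mul (by positivity),
      ← ENNReal.ofReal_mul (by positivity), ← ENNReal.ofReal_mul (by positivity),
      ← ENNReal.ofReal_mul (by positivity)]
    refine ENNReal.ofReal_le_ofReal ?_
    rw [norm_mul, norm_mul, Complex.norm_real, Real.norm_of_nonneg (Real.exp_pos _).le]
    have hk := kernel_est hest z w
    have hp := hpe z w
    calc _ = (‖Complex.exp (2 * Ψ z (star w))‖ * Real.exp (-2 * Φ₂ w)) *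
          (‖u w‖ * Real.exp (-Φ₁ z)) * jb z ^ s := by ring
      _ ≤ (Real.exp (Φ₁ z) * Real.exp (-c * eSq (z - κ w)) * Real.exp (- Φ₂ w)) *
          (‖u w‖ * Real.exp (-Φ₁ z)) *
            (C * jb w ^ s * Real.exp (c / 2 * eSq (z - κ w))) := by gcongr
      _ = _ := by
        have e1 : Real.exp (Φ₁ z) * Real.exp (-Φ₁ z) = 1 := by
          rw [← Real.exp_add]; simp
        have e2 : Real.exp (-(c / 2) * eSq (z - κ w)) =
            Real.exp (-c * eSq (z - κ w)) * Real.exp (c / 2 * eSq (z - κ w)) := by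
          rw [← Real.exp_add]; ring_nf
        rw [e2]
        linear_combination (Real.exp (-c * eSq (z - κ w)) * Real.exp (- Φ₂ w) * ‖u w‖ *
          (C * jb w ^ s * Real.exp (c / 2 * eSq (z - κ w)))) * e1
  calc _ ≤ ∫⁻ z, (ENNReal.ofReal (‖a‖ * C) *
        ∫⁻ w, ENNReal.ofReal (Real.exp (-(c / 2) * eSq (z - κ w))) * F w) ^ 2 := by
        refine lintegral_mono fun z => ?_
        exact pow_le_pow_left' (key z) 2
    _ = ENNReal.ofReal (‖a‖ * C) ^ 2 * ∫⁻ z,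
        (∫⁻ w, ENNReal.ofReal (Real.exp (-(c / 2) * eSq (z - κ w))) * F w) ^ 2 := by
        simp only [mul_pow]
        rw [lintegral_const_mul' _ _ (by finiteness)]
    _ ≤ ENNReal.ofReal (‖a‖ * C) ^ 2 * (ENNReal.ofReal K * ∫⁻ w, F w ^ 2) := by
        gcongr
        exact hsch F hFm
    _ = ENNReal.ofReal ((‖a‖ * C) ^ 2 * K) * ∫⁻ w, F w ^ 2 := by
        rw [← ENNReal.ofReal_pow (by positivity), ← mul_assoc,
          ← ENNReal.ofReal_mul (by positivity)]
    _ ≤ _ := by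
        gcongr
        linarith

/-- Let `Φ₁, Φ₂` be strictly plurisubharmonic quadratic forms on `ℂⁿ`,
`κ : ℂⁿ → ℂⁿ` an `ℝ`-linear isomorphism, `â ∈ ℂ`, and `Ψ` a holomorphic quadratic form on
`ℂ^{2n}` with `2 Re Ψ(z,w̄) − Φ₁(z) − Φ₂(w) ≤ −c|z − κ(w)|²`.  Then for every `s ∈ ℝ` there
is `M > 0` such that for every `u ∈ H^s_{Φ₂}`, `G u (z) = â ∫ e^{2Ψ(z,w̄)} u(w) e^{-2Φ₂(w)} dL(w)`
is entire and `‖G u‖²_{Φ₁,s} ≤ M² ‖u‖²_{Φ₂,s}`. -/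
theorem stmt_8 (n : ℕ) (hn : 1 ≤ n) (Φ₁ Φ₂ : (Fin n → ℂ) → ℝ)
    (hΦ₁ : IsSPSH Φ₁) (hΦ₂ : IsSPSH Φ₂)
    (κ : (Fin n → ℂ) ≃ₗ[ℝ] (Fin n → ℂ)) (a : ℂ)
    (Ψ : (Fin n → ℂ) → (Fin n → ℂ) → ℂ) (hΨ : IsCQuad2 Ψ)
    (c : ℝ) (hc : 0 < c)
    (hest : ∀ z w : Fin n → ℂ,
        2 * (Ψ z (star w)).re - Φ₁ z - Φ₂ w ≤ -c * eSq (z - κ w))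
    (s : ℝ) :
    ∃ M : ℝ, 0 < M ∧ ∀ u : (Fin n → ℂ) → ℂ, Differentiable ℂ u → hnorm Φ₂ s u < ⊤ →
      Differentiable ℂ (berg a Ψ Φ₂ u) ∧
      hnorm Φ₁ s (berg a Ψ Φ₂ u) ≤ ENNReal.ofReal (M ^ 2) * hnorm Φ₂ s u := by
  obtain ⟨M, hM, h⟩ := berg_bound (Φ₁ := Φ₁) hΦ₂.1.cont κ a hc hest s
  exact ⟨M, hM, fun u hu hn => ⟨berg_diff hΦ₁.1.cont hΦ₂.1.cont κ a hΨ hc hest s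
    hu.continuous hn, h u hu.continuous⟩⟩
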